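/- Let P, E, C > 0 and let f, w: ℝ → ℝ be smooth P-periodic functions with w(s) ≥ E for all s. If there exists s₀ with |f(s₀)| ≤ C, then for every s one has f(s)² ≤ 2C² + (2/E²)·(∫₀^P w)·(∫₀^P (f′)² w). (This is the weighted interpolation inequality used to bound the maximum of the ψ-curvature by its weighted L² energy along the flow.) -/

import Mathlib

noncomputable section
open Real Set

def dot2 (v w : ℝ × ℝ) : ℝ := v.1 * w.1 + v.2 * w.2

def nrm2 (v : ℝ × ℝ) : ℝ := Real.sqrt (v.1 ^ 2 + v.2 ^ 2)

def Jrot (v : ℝ × ℝ) : ℝ × ℝ := (-v.2, v.1)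

structure IsClosedCurve (γ : ℝ → ℝ × ℝ) : Prop where
  smooth : ContDiff ℝ (⊤ : ℕ∞) γ
  periodic : Function.Periodic γ (2 * π)
  regular : ∀ u, deriv γ u ≠ 0

def tangentC (γ : ℝ → ℝ × ℝ) (u : ℝ) : ℝ × ℝ := (nrm2 (deriv γ u))⁻¹ • deriv γ u

def normalC (γ : ℝ → ℝ × ℝ) (u : ℝ) : ℝ × ℝ := Jrot (tangentC γ u)

def arcDeriv {F : Type*} [NormedAddCommGroup F] [NormedSpace ℝ F]
    (γ : ℝ → ℝ × ℝ) (h : ℝ → F) (u : ℝ) : F :=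
  (nrm2 (deriv γ u))⁻¹ • deriv h u

def curvature (γ : ℝ → ℝ × ℝ) (u : ℝ) : ℝ :=
  dot2 (arcDeriv γ (tangentC γ) u) (normalC γ u)

def psiCurv (ψ : ℝ × ℝ → ℝ) (γ : ℝ → ℝ × ℝ) (u : ℝ) : ℝ :=
  curvature γ u - fderiv ℝ ψ (γ u) (normalC γ u)

def IsPsiMinimal (ψ : ℝ × ℝ → ℝ) (γ : ℝ → ℝ × ℝ) : Prop :=
  ∀ u, psiCurv ψ γ u = 0

def signedArea (γ : ℝ → ℝ × ℝ) : ℝ :=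
  (1/2) * ∫ u in (0:ℝ)..(2*π), ((γ u).1 * (deriv γ u).2 - (γ u).2 * (deriv γ u).1)

def turningNumber (γ : ℝ → ℝ × ℝ) : ℝ :=
  (1/(2*π)) * ∫ u in (0:ℝ)..(2*π), curvature γ u * nrm2 (deriv γ u)

def windingNumber (γ : ℝ → ℝ × ℝ) : ℝ :=
  (1/(2*π)) * ∫ u in (0:ℝ)..(2*π),
    ((γ u).1 * (deriv γ u).2 - (γ u).2 * (deriv γ u).1) / (nrm2 (γ u))^2

def hess2 (ψ : ℝ × ℝ → ℝ) (x v : ℝ × ℝ) : ℝ :=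
  fderiv ℝ (fun y => fderiv ℝ ψ y v) x v

def SmoothFamily (γ : ℝ → ℝ → ℝ × ℝ) : Prop :=
  ContDiff ℝ (⊤ : ℕ∞) fun p : ℝ × ℝ => γ p.1 p.2

/-!
The oscillation of a periodic `f` is at most the integral of `‖f'‖` over one period. By Jensen,
`(∫ ‖f'‖)² ≤ P ∫ ‖f'‖²`; since `E ≤ w`, each of the two factors can absorb one `E`:
`E P ≤ ∫ w` and `E ∫ ‖f'‖² ≤ ∫ ‖f'‖² w`.
-/

open MeasureTheory Function

section WeightedCauchySchwarz

variable {α : Type*} [MeasurableSpace α] {μ : Measure α} [IsFiniteMeasure μ] {g w : α → ℝ}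

theorem sq_integral_le_measureReal_univ_mul_integral_sq (hg : MemLp g 2 μ) :
    (∫ x, g x ∂μ) ^ 2 ≤ μ.real univ * ∫ x, g x ^ 2 ∂μ := by
  rcases eq_zero_or_neZero μ with rfl | _
  · simp
  have jensen : (⨍ x, g x ∂μ) ^ 2 ≤ ⨍ x, g x ^ 2 ∂μ :=
    (even_two.convexOn_pow (𝕜 := ℝ)).map_average_le (continuous_pow 2).continuousOn isClosed_univ
      (.of_forall fun _ ↦ mem_univ _) (hg.integrable one_le_two) hg.integrable_sq
  calc (∫ x, g x ∂μ) ^ 2 = μ.real univ ^ 2 * (⨍ x, g x ∂μ) ^ 2 := by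
        rw [← measure_smul_average, smul_eq_mul, mul_pow]
    _ ≤ μ.real univ ^ 2 * ⨍ x, g x ^ 2 ∂μ := by gcongr
    _ = μ.real univ * ∫ x, g x ^ 2 ∂μ := by
        rw [← measure_smul_average μ (fun x ↦ g x ^ 2), smul_eq_mul, sq, mul_assoc]

theorem sq_integral_le_integral_mul_integral_sq_mul_div_sq {E : ℝ} (hE : 0 < E)
    (hEw : ∀ᵐ x ∂μ, E ≤ w x) (hw : Integrable w μ) (hg : MemLp g 2 μ)
    (hgw : Integrable (fun x ↦ g x ^ 2 * w x) μ) :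
    (∫ x, g x ∂μ) ^ 2 ≤ (∫ x, w x ∂μ) * (∫ x, g x ^ 2 * w x ∂μ) / E ^ 2 := by
  have mass_le : μ.real univ * E ≤ ∫ x, w x ∂μ := by
    simpa only [integral_const, smul_eq_mul] using
      integral_mono_ae (integrable_const E) hw hEw
  have energy_le : (∫ x, g x ^ 2 ∂μ) * E ≤ ∫ x, g x ^ 2 * w x ∂μ := by
    rw [← integral_mul_const]
    refine integral_mono_ae (hg.integrable_sq.mul_const E) hgw ?_
    filter_upwards [hEw] with x hx
    gcongr
  rw [le_div_iff₀ (by positivity)]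
  calc (∫ x, g x ∂μ) ^ 2 * E ^ 2
      ≤ μ.real univ * (∫ x, g x ^ 2 ∂μ) * E ^ 2 := by
        gcongr
        exact sq_integral_le_measureReal_univ_mul_integral_sq hg
    _ = μ.real univ * E * ((∫ x, g x ^ 2 ∂μ) * E) := by ring
    _ ≤ (∫ x, w x ∂μ) * ∫ x, g x ^ 2 * w x ∂μ := by
        exact mul_le_mul mass_le energy_le (by positivity) (le_trans (by positivity) mass_le)

end WeightedCauchySchwarz

theorem periodic_deriv {𝕜 F : Type*} [NontriviallyNormedField 𝕜] [NormedAddCommGroup F]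
    [NormedSpace 𝕜 F] {f : 𝕜 → F} {c : 𝕜} (hf : Periodic f c) : Periodic (deriv f) c := fun x ↦ by
  rw [← deriv_comp_add_const, funext hf]

section Periodic

variable {F : Type*} [NormedAddCommGroup F] [NormedSpace ℝ F] {f : ℝ → F} {P : ℝ}

theorem norm_sub_le_integral_norm_deriv_of_periodic (hP : 0 < P) (hfP : Periodic f P)
    (hf : Differentiable ℝ f) (hf' : IntervalIntegrable (fun x ↦ ‖deriv f x‖) volume 0 P)
    (s t : ℝ) : ‖f s - f t‖ ≤ ∫ x in (0:ℝ)..P, ‖deriv f x‖ := by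
  have norm_deriv_periodic : Periodic (fun x ↦ ‖deriv f x‖) P := (periodic_deriv hfP).comp norm
  have integrable (a b : ℝ) : IntervalIntegrable (fun x ↦ ‖deriv f x‖) volume a b :=
    norm_deriv_periodic.intervalIntegrable₀ hP.ne' hf' a b
  obtain ⟨y, ⟨hty, hyt⟩, hsy⟩ := hfP.exists_mem_Ico hP s t
  calc ‖f s - f t‖ = ‖f y - f t‖ := by rw [hsy]
    _ ≤ ∫ x in t..y, ‖deriv f x‖ :=
        norm_sub_le_integral_of_norm_deriv_le_of_le hty hf.continuous.continuousOn
          hf.differentiableOn (.of_forall fun _ _ ↦ le_rfl) (integrable t y)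
    _ ≤ ∫ x in t..t + P, ‖deriv f x‖ :=
        intervalIntegral.integral_mono_interval le_rfl hty hyt.le
          (.of_forall fun _ ↦ norm_nonneg _) (integrable t (t + P))
    _ = ∫ x in (0:ℝ)..P, ‖deriv f x‖ := by
        rw [norm_deriv_periodic.intervalIntegral_add_eq t 0, zero_add]

theorem sq_norm_sub_le_weighted_energy_of_periodic {E : ℝ} {w : ℝ → ℝ}
    (hP : 0 < P) (hE : 0 < E) (hf : ContDiff ℝ 1 f) (hfP : Periodic f P)
    (hw : IntervalIntegrable w volume 0 P) (hEw : ∀ x ∈ Ioc 0 P, E ≤ w x) (s t : ℝ) :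
    ‖f s - f t‖ ^ 2 ≤
      (∫ x in (0:ℝ)..P, w x) * (∫ x in (0:ℝ)..P, ‖deriv f x‖ ^ 2 * w x) / E ^ 2 := by
  have continuous_norm_deriv : Continuous fun x ↦ ‖deriv f x‖ := (hf.continuous_deriv le_rfl).norm
  have memLp_norm_deriv : MemLp (fun x ↦ ‖deriv f x‖) 2 (volume.restrict (Ioc 0 P)) :=
    (memLp_two_iff_integrable_sq continuous_norm_deriv.aestronglyMeasurable).2
      ((continuous_norm_deriv.pow 2).intervalIntegrable 0 P).1
  have integrable_energy : IntervalIntegrable (fun x ↦ ‖deriv f x‖ ^ 2 * w x) volume 0 P :=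
    hw.continuousOn_mul (continuous_norm_deriv.pow 2).continuousOn
  calc ‖f s - f t‖ ^ 2 ≤ (∫ x in (0:ℝ)..P, ‖deriv f x‖) ^ 2 := by
        gcongr
        exact norm_sub_le_integral_norm_deriv_of_periodic hP hfP (hf.differentiable one_ne_zero)
          (continuous_norm_deriv.intervalIntegrable 0 P) s t
    _ ≤ _ := by
        simp only [intervalIntegral.integral_of_le hP.le]
        exact sq_integral_le_integral_mul_integral_sq_mul_div_sq hE
          (ae_restrict_of_forall_mem measurableSet_Ioc hEw) hw.1 memLp_norm_deriv
          integrable_energy.1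

theorem periodic_weighted_interpolation_general {E C : ℝ} {w : ℝ → ℝ} (hP : 0 < P) (hE : 0 < E)
    (hf : ContDiff ℝ 1 f) (hfP : Periodic f P) (hw : IntervalIntegrable w volume 0 P)
    (hEw : ∀ x ∈ Ioc 0 P, E ≤ w x) (hC : ∃ t, ‖f t‖ ≤ C) (s : ℝ) :
    ‖f s‖ ^ 2 ≤ 2 * C ^ 2 + (2 / E ^ 2) * (∫ x in (0:ℝ)..P, w x) *
      ∫ x in (0:ℝ)..P, ‖deriv f x‖ ^ 2 * w x := by
  obtain ⟨t, ht⟩ := hC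
  calc ‖f s‖ ^ 2 ≤ (‖f t‖ + ‖f s - f t‖) ^ 2 := by
        gcongr
        exact norm_le_insert' (f s) (f t)
    _ ≤ 2 * (‖f t‖ ^ 2 + ‖f s - f t‖ ^ 2) := add_sq_le
    _ ≤ 2 * (C ^ 2 +
          (∫ x in (0:ℝ)..P, w x) * (∫ x in (0:ℝ)..P, ‖deriv f x‖ ^ 2 * w x) / E ^ 2) := by
        gcongr
        exact sq_norm_sub_le_weighted_energy_of_periodic hP hE hf hfP hw hEw s t
    _ = _ := by ring

end Periodic

/-- weighted interpolation inequality for periodic functions: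
if |f(s₀)| ≤ C somewhere and w ≥ E > 0, then
f(s)² ≤ 2C² + (2/E²)(∫₀^P w)(∫₀^P (f')² w) for every s. -/
theorem periodic_weighted_interpolation
    (P E C : ℝ) (hP : 0 < P) (hE : 0 < E) (hC : 0 < C)
    (f w : ℝ → ℝ) (hf : ContDiff ℝ (⊤ : ℕ∞) f) (hw : ContDiff ℝ (⊤ : ℕ∞) w)
    (hfP : Function.Periodic f P) (hwP : Function.Periodic w P)
    (hwE : ∀ s : ℝ, E ≤ w s)
    (hs₀ : ∃ s₀ : ℝ, |f s₀| ≤ C) :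
    ∀ s : ℝ, (f s) ^ 2
      ≤ 2 * C ^ 2
        + (2 / E ^ 2) * (∫ x in (0:ℝ)..P, w x)
            * ∫ x in (0:ℝ)..P, (deriv f x) ^ 2 * w x := by
  simpa only [norm_eq_abs, sq_abs] using periodic_weighted_interpolation_general hP hE
    (hf.of_le (by simp)) hfP (hw.continuous.intervalIntegrable 0 P) (fun x _ ↦ hwE x) hs₀
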